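/- Let G be any subgroup of SL(2,ℂ) of order 120 under which F(x,y) = x·y·(x^10 − 11x^5y^5 − y^10) is invariant (F(A·(x,y)) = F(x,y) for all A ∈ G). If P ∈ ℂ[x,y] is a homogeneous polynomial of degree 4, of degree 8, or of degree 16 that is invariant under every element of G, then P = 0. (There are no nonzero icosahedral invariants in degrees 4, 8, and 16.) -/

import Mathlib

open MvPolynomial

/-- Substitution of the linear map given by a 2×2 matrix `A` into a two-variable
polynomial: `G(A·(x,y)) = G(ax+by, cx+dy)`. -/
noncomputable def subst (A : Matrix (Fin 2) (Fin 2) ℂ) (G : MvPolynomial (Fin 2) ℂ) :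
    MvPolynomial (Fin 2) ℂ :=
  aeval (fun i => C (A i 0) * X 0 + C (A i 1) * X 1) G

/-- The matrix of an element of \`SL(2,ℂ)\`. -/
noncomputable def mat (A : Matrix.SpecialLinearGroup (Fin 2) ℂ) : Matrix (Fin 2) (Fin 2) ℂ := A

/-- Klein's degree-12 icosahedral form `F(x,y) = x·y·(x^10 − 11x^5y^5 − y^10)`. -/
noncomputable def F : MvPolynomial (Fin 2) ℂ :=
  X 0 * X 1 * ((X 0) ^ 10 - 11 * (X 0) ^ 5 * (X 1) ^ 5 - (X 1) ^ 10)

/-!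
Let `G` act on the projective line. An element of `G` fixing `∞ = [1 : 0]` is upper triangular, and
comparing the lowest coefficients of `F (A · (1, t)) = F (1, t)` shows that it is diagonal with
tenth roots of unity as entries, so the stabilizer of `∞` has at most `10` elements. The orbit of
`∞` consists of zeros of `F`, of which there are at most `12`. As `|G| = 120`, both bounds are
attained: the stabilizer has order `10`, and the orbit is the full set of `12` zeros of `F`.

Let `P` be an invariant form of degree `n`. An element of the stabilizer with eigenvalue `a` at `∞`
multiplies `P(1, 0)` by `a ^ n`. If `10 ∤ n` this forces `P(1, 0) = 0`, so `P` vanishes at all `12`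
zeros of `F` and is divisible by `F`; the quotient is an invariant form of degree `n - 12`. By
induction, `P = 0` unless `n = 10 a + 12 b` for some natural numbers `a` and `b`.
-/

open Projectivization MulAction
open scoped LinearAlgebra.Projectivization MatrixGroups

section HomogeneousPolynomial

variable {σ R : Type*} [CommSemiring R] {P L : MvPolynomial σ R} {m n : ℕ}

theorem aeval_mul_of_isHomogeneous {A : Type*} [CommSemiring A] [Algebra R A]
    (hP : P.IsHomogeneous n) (c : A) (g : σ → A) :
    aeval (fun i => c * g i) P = c ^ n * aeval g P := by
  simp only [aeval_def, eval₂_eq, Finset.mul_sum]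
  refine Finset.sum_congr rfl fun d hd => ?_
  rw [hP.degree_eq_sum_deg_support hd, ← Finset.prod_pow_eq_pow_sum]
  simp only [mul_pow, Finset.prod_mul_distrib]
  exact mul_left_comm _ _ _

theorem eval_smul_of_isHomogeneous (hP : P.IsHomogeneous n) (c : R) (v : σ → R) :
    eval (c • v) P = c ^ n * eval v P :=
  aeval_mul_of_isHomogeneous hP c v

theorem exists_isHomogeneous_eq_mul_of_dvd (hL : L.IsHomogeneous m) (hP : P.IsHomogeneous n)
    (hP0 : P ≠ 0) (hdvd : L ∣ P) :
    ∃ k Q, n = m + k ∧ Q.IsHomogeneous k ∧ P = L * Q := by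
  let := gradedAlgebra (σ := σ) (R := R)
  obtain ⟨Q, rfl⟩ := hdvd
  have hcomponent :
      (DirectSum.decompose (homogeneousSubmodule σ R) (L * Q) n : MvPolynomial σ R) = L * Q :=
    DirectSum.decompose_of_mem_same _ hP
  by_cases hmn : m ≤ n
  · refine ⟨n - m, _, (Nat.add_sub_cancel' hmn).symm,
      (DirectSum.decompose (homogeneousSubmodule σ R) Q (n - m)).2, ?_⟩
    rw [← DirectSum.coe_decompose_mul_of_left_mem_of_le _ hL hmn, hcomponent]
  · rw [DirectSum.coe_decompose_mul_of_left_mem_of_not_le _ hL hmn] at hcomponent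
    exact absurd hcomponent.symm hP0

end HomogeneousPolynomial

section BinaryForm

variable {K : Type*} [Field K]

/-- The set of zeros of a homogeneous polynomial in projective space. For a homogeneous polynomial
the choice of the representative `p.rep` is immaterial, see `mk_mem_projectiveZeros`. -/
def projectiveZeros {σ : Type*} (P : MvPolynomial σ K) : Set (ℙ K (σ → K)) :=
  {p | eval p.rep P = 0}

theorem mk_mem_projectiveZeros {σ : Type*} {P : MvPolynomial σ K} {n : ℕ} (hP : P.IsHomogeneous n)
    {v : σ → K} (hv : v ≠ 0) : mk K v hv ∈ projectiveZeros P ↔ eval v P = 0 := by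
  obtain ⟨c, hc⟩ := exists_smul_eq_mk_rep K v hv
  rw [projectiveZeros, Set.mem_ofPred_eq, ← hc, Units.smul_def, eval_smul_of_isHomogeneous hP,
    mul_eq_zero_iff_left (pow_ne_zero n c.ne_zero)]

/-- The linear form `v₁ x - v₀ y`, whose only zero on the projective line is the class of `v`. -/
noncomputable def linearForm (v : Fin 2 → K) : MvPolynomial (Fin 2) K :=
  C (v 1) * X 0 - C (v 0) * X 1

theorem isHomogeneous_linearForm (v : Fin 2 → K) : (linearForm v).IsHomogeneous 1 :=
  (isHomogeneous_C_mul_X _ _).sub (isHomogeneous_C_mul_X _ _)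

theorem projectiveZeros_linearForm (p : ℙ K (Fin 2 → K)) :
    projectiveZeros (linearForm p.rep) = {p} := by
  ext q
  have heval : eval q.rep (linearForm p.rep) = p.rep 1 * q.rep 0 - p.rep 0 * q.rep 1 := by
    simp [linearForm]
  rw [projectiveZeros, Set.mem_ofPred_eq, heval, sub_eq_zero, Set.mem_singleton_iff]
  refine ⟨fun h => ?_, fun h => by rw [h, mul_comm]⟩
  have hcross : ∀ i j, q.rep j * p.rep i = q.rep i * p.rep j :=
    Fin.forall_fin_two.2 ⟨Fin.forall_fin_two.2 ⟨rfl, by linear_combination -h⟩,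
      Fin.forall_fin_two.2 ⟨by linear_combination h, rfl⟩⟩
  rw [← mk_rep q, ← mk_rep p, mk_eq_mk_iff']
  obtain ⟨j, hj⟩ := Function.ne_iff.1 p.rep_nonzero
  refine ⟨q.rep j / p.rep j, funext fun i => ?_⟩
  rw [Pi.smul_apply, smul_eq_mul, div_mul_eq_mul_div, div_eq_iff hj, hcross i j]

variable {P Q : MvPolynomial (Fin 2) K} {m n : ℕ}

-- Modulo `ℓ = linearForm v` the vectors `v j • (X 0, X 1)` and `X j • v` agree, so by homogeneity
-- `(v j) ^ n * P ≡ (X j) ^ n * P(v)`.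
theorem linearForm_dvd_of_eval_eq_zero (hP : P.IsHomogeneous n) {v : Fin 2 → K} (hv : v ≠ 0)
    (hPv : eval v P = 0) : linearForm v ∣ P := by
  obtain ⟨j, hj⟩ := Function.ne_iff.1 hv
  let π := Ideal.Quotient.mkₐ K (Ideal.span {linearForm v})
  have hπ : π (C (v 1) * X 0) = π (C (v 0) * X 1) :=
    (Ideal.Quotient.mk_eq_mk_iff_sub_mem _ _).2 (Ideal.mem_span_singleton_self _)
  have hproportional : ∀ i j, π (C (v j)) * π (X i) = π (X j) * π (C (v i)) := by
    simp only [← map_mul, mul_comm (X _)]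
    exact Fin.forall_fin_two.2 ⟨Fin.forall_fin_two.2 ⟨rfl, hπ⟩, Fin.forall_fin_two.2 ⟨hπ.symm, rfl⟩⟩
  have hzero : π (C (v j ^ n) * P) = 0 := by
    calc π (C (v j ^ n) * P) = π (C (v j)) ^ n * aeval (fun i => π (X i)) P := by
          rw [map_mul, C_pow, map_pow, ← comp_aeval_apply, aeval_X_left_apply]
      _ = π (X j) ^ n * aeval (fun i => algebraMap K _ (v i)) P := by
          rw [← aeval_mul_of_isHomogeneous hP, funext fun i => hproportional i j,
            aeval_mul_of_isHomogeneous hP]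
          rfl
      _ = 0 := by
          rw [show (fun i => algebraMap K _ (v i)) = algebraMap K _ ∘ v from rfl,
            aeval_algebraMap_apply, aeval_eq_eval, hPv, map_zero, mul_zero]
  have hunit : IsUnit (C (v j ^ n) : MvPolynomial (Fin 2) K) :=
    (isUnit_iff_ne_zero.2 (pow_ne_zero n hj)).map C
  rwa [Ideal.Quotient.mkₐ_eq_mk, Ideal.Quotient.eq_zero_iff_dvd, hunit.dvd_mul_left] at hzero

theorem prod_linearForm_dvd (hP : P.IsHomogeneous n) (S : Finset (ℙ K (Fin 2 → K)))
    (hS : ↑S ⊆ projectiveZeros P) : ∏ p ∈ S, linearForm p.rep ∣ P := by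
  classical
  induction S using Finset.induction_on generalizing P n with
  | empty => simp
  | insert p S hpS ih =>
    rw [Finset.coe_insert, Set.insert_subset_iff] at hS
    rcases eq_or_ne P 0 with rfl | hP0
    · exact dvd_zero _
    obtain ⟨k, Q, -, hQ, rfl⟩ := exists_isHomogeneous_eq_mul_of_dvd (isHomogeneous_linearForm _)
      hP hP0 (linearForm_dvd_of_eval_eq_zero hP p.rep_nonzero hS.1)
    rw [Finset.prod_insert hpS]
    refine mul_dvd_mul_left _ (ih hQ fun q hq => ?_)
    have hqp : q ∉ projectiveZeros (linearForm p.rep) := by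
      rw [projectiveZeros_linearForm]
      rintro rfl
      exact hpS hq
    have hzero : eval q.rep (linearForm p.rep * Q) = 0 := hS.2 hq
    rw [map_mul] at hzero
    exact (mul_eq_zero.1 hzero).resolve_left hqp

theorem isHomogeneous_prod_linearForm (S : Finset (ℙ K (Fin 2 → K))) :
    (∏ p ∈ S, linearForm p.rep).IsHomogeneous S.card := by
  rw [Finset.card_eq_sum_ones]
  exact IsHomogeneous.prod _ _ _ fun p _ => isHomogeneous_linearForm p.rep

theorem encard_projectiveZeros_le (hP : P.IsHomogeneous n) (hP0 : P ≠ 0) :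
    (projectiveZeros P).encard ≤ n := by
  by_contra! hlt
  obtain ⟨S, hS, hcard⟩ := Set.exists_subset_encard_eq (Order.add_one_le_of_lt hlt)
  lift S to Finset (ℙ K (Fin 2 → K)) using Set.finite_of_encard_eq_coe (k := n + 1) hcard
  rw [Set.encard_coe_eq_coe_finsetCard] at hcard
  obtain ⟨k, -, hk, -⟩ := exists_isHomogeneous_eq_mul_of_dvd (isHomogeneous_prod_linearForm S)
    hP hP0 (prod_linearForm_dvd hP S hS)
  have : S.card = n + 1 := by exact_mod_cast hcard
  omega

theorem finite_projectiveZeros (hP : P.IsHomogeneous n) (hP0 : P ≠ 0) :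
    (projectiveZeros P).Finite :=
  Set.finite_of_encard_le_coe (encard_projectiveZeros_le hP hP0)

theorem dvd_of_projectiveZeros_subset (hP : P.IsHomogeneous m) (hP0 : P ≠ 0)
    (hcard : (projectiveZeros P).encard = m) (hQ : Q.IsHomogeneous n)
    (hsub : projectiveZeros P ⊆ projectiveZeros Q) : P ∣ Q := by
  lift projectiveZeros P to Finset (ℙ K (Fin 2 → K)) using finite_projectiveZeros hP hP0 with S hS
  rw [Set.encard_coe_eq_coe_finsetCard, Nat.cast_inj] at hcard
  obtain ⟨k, c, hk, hc, hPc⟩ := exists_isHomogeneous_eq_mul_of_dvd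
    (isHomogeneous_prod_linearForm S) hP hP0 (prod_linearForm_dvd hP S hS.subset)
  obtain rfl : k = 0 := by omega
  have hunit : IsUnit c := by
    rw [totalDegree_eq_zero_iff_eq_C.1 ((totalDegree_zero_iff_isHomogeneous _).2 hc)] at hPc ⊢
    refine IsUnit.map C (isUnit_iff_ne_zero.2 fun hcoeff => hP0 ?_)
    rw [hPc, hcoeff, map_zero, mul_zero]
  rw [hPc, hunit.mul_right_dvd]
  exact prod_linearForm_dvd hQ S hsub

end BinaryForm

section KleinForm

variable {A B : SL(2, ℂ)} {Q : MvPolynomial (Fin 2) ℂ} {n : ℕ}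

theorem eval_subst (M : Matrix (Fin 2) (Fin 2) ℂ) (Q : MvPolynomial (Fin 2) ℂ) (v : Fin 2 → ℂ) :
    eval v (subst M Q) = eval (M.mulVec v) Q := by
  simp only [subst, ← aeval_eq_eval, comp_aeval_apply]
  refine congrArg (fun f => aeval f Q) (funext fun i => ?_)
  simp [Matrix.mulVec, dotProduct]

theorem eval_smul_of_subst_eq (hQ : subst (mat A) Q = Q) (v : Fin 2 → ℂ) :
    eval (A • v) Q = eval v Q :=
  (eval_subst (mat A) Q v).symm.trans (by rw [hQ])

theorem subst_eq_of_subst_mul_eq {M : Matrix (Fin 2) (Fin 2) ℂ} {L : MvPolynomial (Fin 2) ℂ}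
    (hL0 : L ≠ 0) (hL : subst M L = L) (hLQ : subst M (L * Q) = L * Q) : subst M Q = Q := by
  refine mul_left_cancel₀ hL0 ?_
  rwa [subst, map_mul, ← subst, ← subst, hL] at hLQ

theorem smul_mem_projectiveZeros (hQ : Q.IsHomogeneous n) (hA : subst (mat A) Q = Q)
    {p : ℙ ℂ (Fin 2 → ℂ)} (hp : p ∈ projectiveZeros Q) : A • p ∈ projectiveZeros Q := by
  induction p using Projectivization.ind with
  | h v hv =>
    rw [mk_mem_projectiveZeros hQ] at hp
    rwa [smul_mk, mk_mem_projectiveZeros hQ, eval_smul_of_subst_eq hA]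

theorem isHomogeneous_F : F.IsHomogeneous 12 := by
  have hX (i : Fin 2) (k : ℕ) : (X i ^ k : MvPolynomial (Fin 2) ℂ).IsHomogeneous k :=
    isHomogeneous_X_pow i k
  have h11 : (11 : MvPolynomial (Fin 2) ℂ).IsHomogeneous 0 := isHomogeneous_C _ 11
  exact ((isHomogeneous_X ℂ 0).mul (isHomogeneous_X ℂ 1)).mul
    (((hX 0 10).sub ((h11.mul (hX 0 5)).mul (hX 1 5))).sub (hX 1 10))

theorem eval_F (v : Fin 2 → ℂ) :
    eval v F = v 0 * v 1 * (v 0 ^ 10 - 11 * v 0 ^ 5 * v 1 ^ 5 - v 1 ^ 10) := by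
  simp [F]

theorem F_ne_zero : F ≠ 0 := by
  intro h
  have h11 := eval_F ![1, 1]
  norm_num [h] at h11

/-- The point `[1 : 0]` of the complex projective line, the zero of `F` whose stabilizer is computed
and whose orbit turns out to exhaust the zeros of `F`. -/
noncomputable def infinityPoint : ℙ ℂ (Fin 2 → ℂ) :=
  mk ℂ ![1, 0] (Matrix.cons_nonzero_iff.2 (.inl one_ne_zero))

theorem infinityPoint_mem_projectiveZeros_F : infinityPoint ∈ projectiveZeros F := by
  rw [infinityPoint, mk_mem_projectiveZeros isHomogeneous_F, eval_F]
  simp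

theorem smul_vec_one_zero (A : SL(2, ℂ)) : A • ![(1 : ℂ), 0] = ![A 0 0, A 1 0] := by
  ext i
  fin_cases i <;> simp [Matrix.SpecialLinearGroup.smul_def, Matrix.mulVec, dotProduct]

theorem smul_infinityPoint_eq_iff : A • infinityPoint = infinityPoint ↔ A 1 0 = 0 := by
  rw [infinityPoint, smul_mk, mk_eq_mk_iff']
  simp only [smul_vec_one_zero]
  constructor
  · rintro ⟨c, hc⟩
    simpa using (congrFun hc 1).symm
  · intro h
    exact ⟨A 0 0, by simp [h]⟩

theorem apply_zero_zero_mul_apply_one_one (h10 : A 1 0 = 0) : A 0 0 * A 1 1 = 1 := by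
  have hdet := A.det_coe
  rwa [Matrix.det_fin_two, h10, mul_zero, sub_zero] at hdet

-- This is `F (a₀₀ + a₀₁ t, a₁₁ t) = F (1, t)` with a common factor `t` cancelled. The value and the
-- derivative at `t = 0` determine the first row of `A`.
theorem polynomial_identity_of_subst_F_eq (hF : subst (mat A) F = F) (h10 : A 1 0 = 0) :
    letI a := Polynomial.C (A 0 0) + Polynomial.C (A 0 1) * Polynomial.X
    letI d := Polynomial.C (A 1 1)
    a * d * (a ^ 10 - 11 * a ^ 5 * (d * Polynomial.X) ^ 5 - (d * Polynomial.X) ^ 10) =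
      1 - 11 * Polynomial.X ^ 5 - Polynomial.X ^ 10 := by
  refine mul_left_cancel₀ Polynomial.X_ne_zero (Polynomial.funext fun t => ?_)
  have heval := eval_subst (mat A) F ![1, t]
  rw [hF, eval_F, eval_F] at heval
  simp only [mat, Matrix.mulVec, dotProduct, Fin.sum_univ_two, Matrix.cons_val_zero,
    Matrix.cons_val_one, h10] at heval
  simp only [Polynomial.eval_mul, Polynomial.eval_X, Polynomial.eval_add, Polynomial.eval_C,
    Polynomial.eval_sub, Polynomial.eval_pow, Polynomial.eval_ofNat, Polynomial.eval_one]
  linear_combination -heval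

theorem apply_zero_zero_pow_ten (hF : subst (mat A) F = F) (h10 : A 1 0 = 0) :
    A 0 0 ^ 10 = 1 := by
  have hvalue : A 0 0 * A 1 1 * A 0 0 ^ 10 = 1 := by
    simpa using congrArg (Polynomial.eval 0) (polynomial_identity_of_subst_F_eq hF h10)
  rwa [apply_zero_zero_mul_apply_one_one h10, one_mul] at hvalue

theorem apply_zero_one_eq_zero (hF : subst (mat A) F = F) (h10 : A 1 0 = 0) : A 0 1 = 0 := by
  have hderivative :
      A 0 1 * A 1 1 * A 0 0 ^ 10 + A 0 0 * A 1 1 * (10 * A 0 0 ^ 9 * A 0 1) = 0 := by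
    simpa [Polynomial.derivative_pow] using congrArg
      (fun p => Polynomial.eval 0 (Polynomial.derivative p))
      (polynomial_identity_of_subst_F_eq hF h10)
  have hpow := apply_zero_zero_pow_ten hF h10
  have hdet := apply_zero_zero_mul_apply_one_one h10
  linear_combination A 0 0 / 11 * hderivative - A 0 1 * A 0 0 ^ 10 * hdet - A 0 1 * hpow

theorem eq_of_apply_zero_zero_eq (hA : subst (mat A) F = F) (hB : subst (mat B) F = F)
    (hA10 : A 1 0 = 0) (hB10 : B 1 0 = 0) (h : A 0 0 = B 0 0) : A = B := by
  have hdetA := apply_zero_zero_mul_apply_one_one hA10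
  have hdetB := apply_zero_zero_mul_apply_one_one hB10
  rw [← h] at hdetB
  ext i j
  fin_cases i <;> fin_cases j
  · exact h
  · exact (apply_zero_one_eq_zero hA hA10).trans (apply_zero_one_eq_zero hB hB10).symm
  · exact hA10.trans hB10.symm
  · exact mul_left_cancel₀ (left_ne_zero_of_mul_eq_one hdetA) (hdetA.trans hdetB.symm)

end KleinForm

section IcosahedralGroup

variable {G : Subgroup SL(2, ℂ)} {P : MvPolynomial (Fin 2) ℂ} {n : ℕ}

theorem pow_ten_of_mem_stabilizer (hF : ∀ A ∈ G, subst (mat A) F = F) {A : G}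
    (hA : A ∈ stabilizer G infinityPoint) : A.1 0 0 ^ 10 = 1 :=
  apply_zero_zero_pow_ten (hF A A.2) (smul_infinityPoint_eq_iff.1 hA)

theorem card_stabilizer_infinityPoint_le (hF : ∀ A ∈ G, subst (mat A) F = F) {k : ℕ} [NeZero k]
    (hk : ∀ A ∈ stabilizer G infinityPoint, A.1 0 0 ^ k = 1) :
    Nat.card (stabilizer G infinityPoint) ≤ k := by
  let entry (A : stabilizer G infinityPoint) : rootsOfUnity k ℂ :=
    rootsOfUnity.mkOfPowEq (A.1.1 0 0) (hk A A.2)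
  have hentry : Function.Injective entry := fun A B h => by
    have hAB : A.1.1 0 0 = B.1.1 0 0 := congrArg (fun ζ => (ζ.1 : ℂ)) h
    exact Subtype.ext (Subtype.ext (eq_of_apply_zero_zero_eq (hF _ A.1.2) (hF _ B.1.2)
      (smul_infinityPoint_eq_iff.1 A.2) (smul_infinityPoint_eq_iff.1 B.2) hAB))
  exact (Nat.card_le_card_of_injective entry hentry).trans (card_rootsOfUnity ℂ k)

theorem orbit_infinityPoint_subset (hP : ∀ A ∈ G, subst (mat A) P = P) (hPn : P.IsHomogeneous n)
    (h : infinityPoint ∈ projectiveZeros P) : orbit G infinityPoint ⊆ projectiveZeros P := by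
  rintro _ ⟨A, rfl⟩
  exact smul_mem_projectiveZeros hPn (hP A A.2) h

theorem card_stabilizer_and_orbit_infinityPoint (hcard : Nat.card G = 120)
    (hF : ∀ A ∈ G, subst (mat A) F = F) :
    Nat.card (stabilizer G infinityPoint) = 10 ∧ orbit G infinityPoint = projectiveZeros F ∧
      (projectiveZeros F).encard = 12 := by
  have hstabilizer : Nat.card (stabilizer G infinityPoint) ≤ 10 :=
    card_stabilizer_infinityPoint_le hF fun _ => pow_ten_of_mem_stabilizer hF
  have hfinite := finite_projectiveZeros isHomogeneous_F F_ne_zero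
  have hsubset := orbit_infinityPoint_subset hF isHomogeneous_F infinityPoint_mem_projectiveZeros_F
  have hle : (orbit G infinityPoint).ncard ≤ (projectiveZeros F).ncard :=
    Set.ncard_le_ncard hsubset hfinite
  have hzeros : (projectiveZeros F).ncard ≤ 12 := by
    rw [← Nat.cast_le (α := ℕ∞), hfinite.cast_ncard_eq]
    exact encard_projectiveZeros_le isHomogeneous_F F_ne_zero
  have hmul := (stabilizer G infinityPoint).card_mul_index
  rw [index_stabilizer, hcard] at hmul
  have horbit : 12 ≤ (orbit G infinityPoint).ncard := by nlinarith
  refine ⟨by nlinarith, Set.eq_of_subset_of_ncard_le hsubset (by omega) hfinite, ?_⟩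
  rw [← hfinite.cast_ncard_eq]
  norm_cast
  omega

theorem infinityPoint_mem_projectiveZeros (hcard : Nat.card G = 120)
    (hF : ∀ A ∈ G, subst (mat A) F = F) (hP : ∀ A ∈ G, subst (mat A) P = P)
    (hPn : P.IsHomogeneous n) (hn : ¬ 10 ∣ n) : infinityPoint ∈ projectiveZeros P := by
  contrapose! hn with hP0
  rw [infinityPoint, mk_mem_projectiveZeros hPn] at hP0
  have hpow (A : G) (hA : A ∈ stabilizer G infinityPoint) : A.1 0 0 ^ n = 1 := by
    have hA10 : A.1 1 0 = 0 := smul_infinityPoint_eq_iff.1 hA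
    have hscale : A.1 • ![(1 : ℂ), 0] = A.1 0 0 • ![1, 0] := by
      rw [smul_vec_one_zero, hA10]
      simp
    have hinvariant := eval_smul_of_subst_eq (hP A A.2) ![1, 0]
    rw [hscale, eval_smul_of_isHomogeneous hPn] at hinvariant
    exact (mul_eq_right₀ hP0).1 hinvariant
  have hgcd : 0 < n.gcd 10 := Nat.gcd_pos_of_pos_right n (by norm_num)
  have : NeZero (n.gcd 10) := ⟨hgcd.ne'⟩
  have hle := card_stabilizer_infinityPoint_le hF fun A hA =>
    pow_gcd_eq_one.2 ⟨hpow A hA, pow_ten_of_mem_stabilizer hF hA⟩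
  rw [(card_stabilizer_and_orbit_infinityPoint hcard hF).1] at hle
  exact Nat.gcd_eq_right_iff_dvd.1 (le_antisymm (Nat.gcd_le_right n (by norm_num)) hle)

theorem F_dvd_of_invariant (hcard : Nat.card G = 120) (hF : ∀ A ∈ G, subst (mat A) F = F)
    (hP : ∀ A ∈ G, subst (mat A) P = P) (hPn : P.IsHomogeneous n) (hn : ¬ 10 ∣ n) : F ∣ P := by
  obtain ⟨-, horbit, hzeros⟩ := card_stabilizer_and_orbit_infinityPoint hcard hF
  refine dvd_of_projectiveZeros_subset isHomogeneous_F F_ne_zero hzeros hPn ?_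
  rw [← horbit]
  exact orbit_infinityPoint_subset hP hPn (infinityPoint_mem_projectiveZeros hcard hF hP hPn hn)

theorem no_invariants_in_degrees_4_8_16_general (hcard : Nat.card G = 120)
    (hF : ∀ A ∈ G, subst (mat A) F = F) (hn : ∀ a b : ℕ, n ≠ 10 * a + 12 * b)
    (hPn : P.IsHomogeneous n) (hP : ∀ A ∈ G, subst (mat A) P = P) : P = 0 := by
  induction n using Nat.strong_induction_on generalizing P with
  | _ n ih =>
    by_contra hP0
    have h10 : ¬ 10 ∣ n := fun ⟨a, ha⟩ => hn a 0 ha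
    obtain ⟨k, Q, rfl, hQ, rfl⟩ := exists_isHomogeneous_eq_mul_of_dvd isHomogeneous_F hPn hP0
      (F_dvd_of_invariant hcard hF hP hPn h10)
    have hQ0 : Q = 0 := ih k (by omega) (fun a b h => hn a (b + 1) (by omega)) hQ fun A hA =>
      subst_eq_of_subst_mul_eq F_ne_zero (hF A hA) (hP A hA)
    exact hP0 (by rw [hQ0, mul_zero])

end IcosahedralGroup

/-- For any order-120 subgroup `G` of `SL(2,ℂ)` leaving `F` invariant (the binary
icosahedral group), there are no nonzero `G`-invariant homogeneous polynomials of
degree 4, 8, or 16. -/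
theorem no_invariants_in_degrees_4_8_16
    (G : Subgroup (Matrix.SpecialLinearGroup (Fin 2) ℂ)) (hcard : Nat.card G = 120)
    (hF : ∀ A ∈ G, subst (mat A) F = F)
    (P : MvPolynomial (Fin 2) ℂ)
    (hdeg : P.IsHomogeneous 4 ∨ P.IsHomogeneous 8 ∨ P.IsHomogeneous 16)
    (hP : ∀ A ∈ G, subst (mat A) P = P) :
    P = 0 := by
  rcases hdeg with h | h | h <;>
    exact no_invariants_in_degrees_4_8_16_general hcard hF (by omega) h hP
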